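/- arXiv:1804.01357 — 2 statements merged into one kernel-verified Lean document; each statement's English description precedes it below -/
import Mathlib

section
/- If k_0 + k_1 > 0 and a(k_0 − k_1) ≤ 0, then f is strictly decreasing on (0,∞). (Hence in this case the minimizer of f over (0, d_max] is d* = d_max, so the Stackelberg leader chooses maximal signal separation.) -/
/-- The standard Gaussian tail function `Q(x) = ∫_x^∞ (1/√(2π)) e^{-t²/2} dt`. -/
noncomputable def Q (x : ℝ) : ℝ :=
  ∫ t in Set.Ioi x, (1 / Real.sqrt (2 * Real.pi)) * Real.exp (-t ^ 2 / 2)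

/-- The transmitter's (normalized) Bayes risk as a function of the normalized signal
separation `d`, when the receiver applies the likelihood-ratio test with threshold
`τ = eᵃ`: `f(d) = k₀ e^{a/2} Q(a/d + d/2) + k₁ e^{-a/2} Q(d/2 - a/d)`. -/
noncomputable def f (a k0 k1 d : ℝ) : ℝ :=
  k0 * Real.exp (a / 2) * Q (a / d + d / 2) + k1 * Real.exp (-(a / 2)) * Q (d / 2 - a / d)

/-!
Completing the square gives `e^{a/2} φ(d/2 + a/d) = e^{-(a/d)²/2} φ(d/2)`, where `φ = -Q'` is the
standard Gaussian density. The right side is even in `a`, so the derivatives of the two terms of `f`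
share this positive factor and
`f'(d) = -e^{-(a/d)²/2} φ(d/2) ((k₀ + k₁)/2 - a(k₀ - k₁)/d²)`.
-/

open MeasureTheory ProbabilityTheory Set
open scoped NNReal Topology

theorem hasDerivAt_integral_Ioi {E : Type*} [NormedAddCommGroup E] [NormedSpace ℝ E]
    [CompleteSpace E] {g : ℝ → E} {c x : ℝ} (hg : IntegrableOn g (Ioi c)) (hcx : c < x)
    (hx : ContinuousAt g x) : HasDerivAt (fun y ↦ ∫ t in Ioi y, g t) (-g x) x := by
  have integrable_Ioi {y : ℝ} (hy : c < y) : IntegrableOn g (Ioi y) :=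
    hg.mono_set (Ioi_subset_Ioi hy.le)
  have split_at_c : (fun y ↦ ∫ t in Ioi y, g t) =ᶠ[𝓝 x]
      fun y ↦ (∫ t in Ioi c, g t) - ∫ t in c..y, g t := by
    filter_upwards [Ioi_mem_nhds hcx] with y hy
    exact eq_sub_of_add_eq'
      (intervalIntegral.integral_interval_add_Ioi hg (integrable_Ioi hy))
  have deriv_primitive : HasDerivAt (fun y ↦ ∫ t in c..y, g t) (g x) x :=
    intervalIntegral.integral_hasDerivAt_right
      ((intervalIntegrable_iff_integrableOn_Ioc_of_le hcx.le).2 (hg.mono_set Ioc_subset_Ioi_self))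
      ⟨Ioi c, Ioi_mem_nhds hcx, hg.aestronglyMeasurable⟩ hx
  exact (deriv_primitive.const_sub _).congr_of_eventuallyEq split_at_c

theorem continuous_gaussianPDFReal (μ : ℝ) (v : ℝ≥0) : Continuous (gaussianPDFReal μ v) := by
  rw [gaussianPDFReal_def]
  fun_prop

theorem exp_mul_gaussianPDFReal_add (μ : ℝ) (v : ℝ≥0) (x y : ℝ) :
    Real.exp ((x - μ) * y / v) * gaussianPDFReal μ v (x + y) =
      Real.exp (-y ^ 2 / (2 * v)) * gaussianPDFReal μ v x := by
  simp only [gaussianPDFReal, mul_left_comm (Real.exp _), ← Real.exp_add]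
  congr 2
  ring

theorem Q_eq_integral_gaussianPDFReal (x : ℝ) :
    Q x = ∫ t in Ioi x, gaussianPDFReal 0 1 t := by
  simp [Q, gaussianPDFReal]

theorem hasDerivAt_Q (x : ℝ) : HasDerivAt Q (-gaussianPDFReal 0 1 x) x := by
  rw [funext Q_eq_integral_gaussianPDFReal]
  exact hasDerivAt_integral_Ioi (integrable_gaussianPDFReal 0 1).integrableOn (sub_one_lt x)
    (continuous_gaussianPDFReal 0 1).continuousAt

theorem exp_mul_gaussianPDFReal_half_add_div (a : ℝ) {d : ℝ} (hd : d ≠ 0) :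
    Real.exp (a / 2) * gaussianPDFReal 0 1 (d / 2 + a / d) =
      Real.exp (-(a / d) ^ 2 / 2) * gaussianPDFReal 0 1 (d / 2) := by
  have half_eq : a / 2 = (d / 2 - 0) * (a / d) / (1 : ℝ≥0) := by
    simp only [NNReal.coe_one]
    field_simp
    ring
  simpa [half_eq] using exp_mul_gaussianPDFReal_add 0 1 (d / 2) (a / d)

theorem hasDerivAt_exp_mul_Q_half_add_div (a : ℝ) {d : ℝ} (hd : d ≠ 0) :
    HasDerivAt (fun d ↦ Real.exp (a / 2) * Q (d / 2 + a / d))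
      (-(Real.exp (-(a / d) ^ 2 / 2) * gaussianPDFReal 0 1 (d / 2) * (1 / 2 - a / d ^ 2))) d := by
  have deriv_arg : HasDerivAt (fun d : ℝ ↦ d / 2 + a / d) (1 / 2 - a / d ^ 2) d := by
    simpa [div_eq_mul_inv, sub_eq_add_neg] using
      ((hasDerivAt_id' d).div_const 2).fun_add ((hasDerivAt_inv hd).const_mul a)
  refine (((hasDerivAt_Q _).comp d deriv_arg).const_mul _).congr_deriv ?_
  rw [← exp_mul_gaussianPDFReal_half_add_div a hd]
  ring

theorem f_eq_add (a k0 k1 d : ℝ) :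
    f a k0 k1 d = k0 * (Real.exp (a / 2) * Q (d / 2 + a / d)) +
      k1 * (Real.exp (-a / 2) * Q (d / 2 + -a / d)) := by
  rw [f, neg_div, neg_div, ← sub_eq_add_neg, add_comm (a / d), mul_assoc, mul_assoc]

theorem hasDerivAt_f (a k0 k1 : ℝ) {d : ℝ} (hd : d ≠ 0) :
    HasDerivAt (f a k0 k1)
      (-(Real.exp (-(a / d) ^ 2 / 2) * gaussianPDFReal 0 1 (d / 2) *
        ((k0 + k1) / 2 - a * (k0 - k1) / d ^ 2))) d := by
  rw [funext (f_eq_add a k0 k1)]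
  refine (((hasDerivAt_exp_mul_Q_half_add_div a hd).const_mul k0).add
    ((hasDerivAt_exp_mul_Q_half_add_div (-a) hd).const_mul k1)).congr_deriv ?_
  rw [neg_div d a, neg_sq]
  ring

/-- If `k₀ + k₁ > 0` and `a(k₀ - k₁) ≤ 0`, then `f` is strictly decreasing on `(0, ∞)`. -/
theorem stmt_8 (a k0 k1 : ℝ) (hsum : 0 < k0 + k1) (hdiff : a * (k0 - k1) ≤ 0) :
    StrictAntiOn (f a k0 k1) (Set.Ioi 0) := by
  refine strictAntiOn_of_hasDerivWithinAt_neg (convex_Ioi 0)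
    (fun d hd ↦ (hasDerivAt_f a k0 k1 (ne_of_gt hd)).continuousAt.continuousWithinAt)
    (fun d hd ↦ (hasDerivAt_f a k0 k1 (ne_of_gt (interior_subset hd))).hasDerivWithinAt)
    fun d _ ↦ neg_neg_of_pos ?_
  have cross_nonpos : a * (k0 - k1) / d ^ 2 ≤ 0 :=
    div_nonpos_of_nonpos_of_nonneg hdiff (sq_nonneg d)
  have bracket_pos : 0 < (k0 + k1) / 2 - a * (k0 - k1) / d ^ 2 := by linarith
  have density_pos : 0 < gaussianPDFReal 0 1 (d / 2) := gaussianPDFReal_pos 0 1 _ one_ne_zero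
  positivity
end

section
/- Suppose σ > 0, P_0 > 0, P_1 > 0, the transmitter and receiver share identical cost parameters C_{10} > C_{00} and C_{01} > C_{11}, but have (possibly different) subjective priors π_0^t, π_0^r ∈ (0,1). Let S_0* = −√P_0, S_1* = √P_1, τ = π_0^r(C_{10} − C_{00})/(π_1^r(C_{01} − C_{11})), and η* = (S_0* + S_1*)/2 + σ² ln(τ)/(S_1* − S_0*). Then the pair ((S_0*, S_1*), [η*, ∞)) is a Nash equilibrium of the binary Gaussian signaling game, and it is informative; i.e., as long as the priors are mutually absolutely continuous, subjectivity in the priors does not destroy the informative Nash equilibrium. -/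
/-- Gaussian density with standard deviation `σ` (centered at 0). -/
noncomputable def gauss (σ y : ℝ) : ℝ :=
  (1 / (σ * Real.sqrt (2 * Real.pi))) * Real.exp (-y ^ 2 / (2 * σ ^ 2))

/-- Bayes risk of a player with prior `π₀` (and `π₁ = 1 - π₀`) and costs `Cⱼᵢ`
(cost of deciding `Hⱼ` when `Hᵢ` is true), when the signal levels are `S₀, S₁` and
the receiver decides `H₁` iff the observation lies in `Γ₁`. -/
noncomputable def bayesRisk (σ S0 S1 π0 C00 C01 C10 C11 : ℝ) (Γ1 : Set ℝ) : ℝ :=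
  π0 * (C00 * (∫ y in Γ1ᶜ, gauss σ (y - S0)) + C10 * (∫ y in Γ1, gauss σ (y - S0)))
    + (1 - π0) * (C01 * (∫ y in Γ1ᶜ, gauss σ (y - S1)) + C11 * (∫ y in Γ1, gauss σ (y - S1)))

/-!
Up to a constant, the Bayes risk is `a * ℙ(Γ₁ | S₀) - b * ℙ(Γ₁ | S₁)` with `a = π₀ (C₁₀ - C₀₀)` and
`b = (1 - π₀) (C₀₁ - C₁₁)`. The receiver minimizes it by deciding `H₁` where
`a φ(y - S₀) ≤ b φ(y - S₁)`; for `S₀ < S₁` the Gaussian likelihood ratio is increasing in `y`, so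
this region is a half-line `[η, ∞)`. Against any half-line, a transmitter with `a, b ≥ 0` wants `S₀`
as small and `S₁` as large as the power constraints allow, whatever its prior, its costs and the
value of `η` are.
-/

open MeasureTheory Set

lemma gauss_sub_eq_gaussianPDFReal {σ : ℝ} (hσ : 0 ≤ σ) (S y : ℝ) :
    gauss σ (y - S) = ProbabilityTheory.gaussianPDFReal S (σ.toNNReal ^ 2) y := by
  have hsqrt : √(2 * Real.pi * σ ^ 2) = σ * √(2 * Real.pi) := by
    rw [Real.sqrt_mul' _ (sq_nonneg σ), Real.sqrt_sq hσ, mul_comm]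
  simp only [gauss, ProbabilityTheory.gaussianPDFReal, NNReal.coe_pow, Real.coe_toNNReal σ hσ,
    hsqrt, one_div]

lemma gauss_nonneg {σ : ℝ} (hσ : 0 ≤ σ) (y : ℝ) : 0 ≤ gauss σ y := by
  unfold gauss
  positivity

lemma gauss_pos {σ : ℝ} (hσ : 0 < σ) (y : ℝ) : 0 < gauss σ y := by
  unfold gauss
  positivity

@[fun_prop]
lemma continuous_gauss (σ : ℝ) : Continuous (gauss σ) := by
  unfold gauss
  fun_prop

lemma integrable_gauss_sub {σ : ℝ} (hσ : 0 ≤ σ) (S : ℝ) :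
    Integrable fun y ↦ gauss σ (y - S) := by
  simpa only [gauss_sub_eq_gaussianPDFReal hσ] using
    ProbabilityTheory.integrable_gaussianPDFReal S _

lemma integral_gauss_sub {σ : ℝ} (hσ : 0 < σ) (S : ℝ) : ∫ y, gauss σ (y - S) = 1 := by
  simpa only [gauss_sub_eq_gaussianPDFReal hσ.le] using
    ProbabilityTheory.integral_gaussianPDFReal_eq_one S (pow_pos (Real.toNNReal_pos.2 hσ) 2).ne'

lemma setIntegral_Ici_comp_sub_right {E : Type*} [NormedAddCommGroup E] [NormedSpace ℝ E]
    (f : ℝ → E) (η s : ℝ) : ∫ y in Ici η, f (y - s) = ∫ y in Ici (η - s), f y := by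
  rw [← (measurePreserving_sub_right volume s).setIntegral_preimage_emb
    (measurableEmbedding_subRight s) f, preimage_sub_const_Ici, sub_add_cancel]

lemma monotone_setIntegral_Ici_comp_sub_right {f : ℝ → ℝ} (hf : Integrable f) (hf0 : 0 ≤ f)
    (η : ℝ) : Monotone fun s ↦ ∫ y in Ici η, f (y - s) := by
  intro s t hst
  simp only [setIntegral_Ici_comp_sub_right]
  exact setIntegral_mono_set hf.integrableOn (ae_of_all _ hf0)
    (Ici_subset_Ici.2 (sub_le_sub_left hst η)).eventuallyLE

lemma monotone_setIntegral_Ici_gauss_sub {σ : ℝ} (hσ : 0 ≤ σ) (η : ℝ) :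
    Monotone fun S ↦ ∫ y in Ici η, gauss σ (y - S) := by
  have hint : Integrable (gauss σ) := by simpa only [sub_zero] using integrable_gauss_sub hσ 0
  exact monotone_setIntegral_Ici_comp_sub_right hint (gauss_nonneg hσ) η

lemma gauss_sub_eq_gauss_sub_mul_exp {σ : ℝ} (hσ : σ ≠ 0) (S0 S1 y : ℝ) :
    gauss σ (y - S1) =
      gauss σ (y - S0) * Real.exp ((S1 - S0) / σ ^ 2 * (y - (S0 + S1) / 2)) := by
  rw [gauss, gauss, mul_assoc, ← Real.exp_add]
  congr 2
  field_simp
  ring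

/-- The observation at which the likelihood ratio `gauss σ (y - S1) / gauss σ (y - S0)` equals `τ`,
i.e. the threshold `η` of the paper's likelihood ratio test. It is meaningful for `S0 ≠ S1` and
`0 < τ`. -/
noncomputable def likelihoodRatioThreshold (σ S0 S1 τ : ℝ) : ℝ :=
  (S0 + S1) / 2 + σ ^ 2 * Real.log τ / (S1 - S0)

lemma likelihoodRatioThreshold_le_iff {σ S0 S1 : ℝ} (hσ : σ ≠ 0) (hS : S0 < S1) (τ y : ℝ) :
    likelihoodRatioThreshold σ S0 S1 τ ≤ y ↔
      Real.log τ ≤ (S1 - S0) / σ ^ 2 * (y - (S0 + S1) / 2) := by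
  have hd : 0 < S1 - S0 := sub_pos.2 hS
  rw [likelihoodRatioThreshold, ← le_sub_iff_add_le', div_le_iff₀ hd, div_mul_eq_mul_div,
    le_div_iff₀ (by positivity), mul_comm (σ ^ 2), mul_comm (S1 - S0)]

lemma mul_gauss_sub_le_mul_gauss_sub_iff {σ S0 S1 a b : ℝ} (hσ : 0 < σ) (hS : S0 < S1)
    (ha : 0 < a) (hb : 0 < b) (y : ℝ) :
    a * gauss σ (y - S0) ≤ b * gauss σ (y - S1) ↔
      likelihoodRatioThreshold σ S0 S1 (a / b) ≤ y := by
  rw [likelihoodRatioThreshold_le_iff hσ.ne' hS, Real.log_le_iff_le_exp (div_pos ha hb),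
    div_le_iff₀' hb, gauss_sub_eq_gauss_sub_mul_exp hσ.ne' S0 S1, mul_left_comm, mul_comm a,
    mul_le_mul_iff_right₀ (gauss_pos hσ _)]

lemma bayesRisk_eq {σ : ℝ} (hσ : 0 < σ) (S0 S1 π0 C00 C01 C10 C11 : ℝ) {Γ1 : Set ℝ}
    (hΓ1 : MeasurableSet Γ1) :
    bayesRisk σ S0 S1 π0 C00 C01 C10 C11 Γ1 =
      π0 * C00 + (1 - π0) * C01 + (π0 * (C10 - C00) * (∫ y in Γ1, gauss σ (y - S0)) -
        (1 - π0) * (C01 - C11) * ∫ y in Γ1, gauss σ (y - S1)) := by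
  have hcompl (S : ℝ) : ∫ y in Γ1ᶜ, gauss σ (y - S) = 1 - ∫ y in Γ1, gauss σ (y - S) := by
    rw [setIntegral_compl hΓ1 (integrable_gauss_sub hσ.le S), integral_gauss_sub hσ]
  rw [bayesRisk, hcompl, hcompl]
  ring

lemma bayesRisk_Ici_le_of_le_of_le {σ π0 C00 C01 C10 C11 S0 S0' S1 S1' : ℝ} (hσ : 0 < σ)
    (hπ0 : π0 ∈ Icc 0 1) (h10 : C00 ≤ C10) (h01 : C11 ≤ C01) (hS0 : S0 ≤ S0') (hS1 : S1' ≤ S1)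
    (η : ℝ) :
    bayesRisk σ S0 S1 π0 C00 C01 C10 C11 (Ici η) ≤
      bayesRisk σ S0' S1' π0 C00 C01 C10 C11 (Ici η) := by
  rw [bayesRisk_eq hσ _ _ _ _ _ _ _ measurableSet_Ici,
    bayesRisk_eq hσ _ _ _ _ _ _ _ measurableSet_Ici]
  have htail := monotone_setIntegral_Ici_gauss_sub hσ.le η
  refine add_le_add_right (sub_le_sub ?_ ?_) _
  · exact mul_le_mul_of_nonneg_left (htail hS0) (mul_nonneg hπ0.1 (sub_nonneg.2 h10))
  · exact mul_le_mul_of_nonneg_left (htail hS1)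
      (mul_nonneg (sub_nonneg.2 hπ0.2) (sub_nonneg.2 h01))

lemma setIntegral_Ici_likelihoodRatioThreshold_le {σ S0 S1 a b : ℝ} (hσ : 0 < σ)
    (hS : S0 < S1) (ha : 0 < a) (hb : 0 < b) {Γ1 : Set ℝ} (hΓ1 : MeasurableSet Γ1) :
    ∫ y in Ici (likelihoodRatioThreshold σ S0 S1 (a / b)),
        (a * gauss σ (y - S0) - b * gauss σ (y - S1)) ≤
      ∫ y in Γ1, (a * gauss σ (y - S0) - b * gauss σ (y - S1)) := by
  have hregion : Ici (likelihoodRatioThreshold σ S0 S1 (a / b)) =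
      {y | a * gauss σ (y - S0) - b * gauss σ (y - S1) ≤ 0} := by
    ext y
    rw [mem_Ici, mem_ofPred_eq, sub_nonpos, mul_gauss_sub_le_mul_gauss_sub_iff hσ hS ha hb]
  rw [hregion]
  exact setIntegral_nonpos_le hΓ1 (Continuous.stronglyMeasurable (by fun_prop))
    (((integrable_gauss_sub hσ.le S0).const_mul a).sub
      ((integrable_gauss_sub hσ.le S1).const_mul b))

lemma bayesRisk_Ici_likelihoodRatioThreshold_le {σ S0 S1 π0 C00 C01 C10 C11 : ℝ} (hσ : 0 < σ)
    (hS : S0 < S1) (hπ0 : π0 ∈ Ioo 0 1) (h10 : C00 < C10) (h01 : C11 < C01) {Γ1 : Set ℝ}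
    (hΓ1 : MeasurableSet Γ1) :
    bayesRisk σ S0 S1 π0 C00 C01 C10 C11
        (Ici (likelihoodRatioThreshold σ S0 S1
          (π0 * (C10 - C00) / ((1 - π0) * (C01 - C11))))) ≤
      bayesRisk σ S0 S1 π0 C00 C01 C10 C11 Γ1 := by
  have hsub (a b : ℝ) (Γ : Set ℝ) :
      a * (∫ y in Γ, gauss σ (y - S0)) - b * (∫ y in Γ, gauss σ (y - S1)) =
        ∫ y in Γ, (a * gauss σ (y - S0) - b * gauss σ (y - S1)) := by
    rw [integral_sub ((integrable_gauss_sub hσ.le S0).const_mul a).integrableOn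
      ((integrable_gauss_sub hσ.le S1).const_mul b).integrableOn, integral_const_mul,
      integral_const_mul]
  rw [bayesRisk_eq hσ _ _ _ _ _ _ _ measurableSet_Ici, bayesRisk_eq hσ _ _ _ _ _ _ _ hΓ1,
    hsub, hsub]
  exact add_le_add_right (setIntegral_Ici_likelihoodRatioThreshold_le hσ hS
    (mul_pos hπ0.1 (sub_pos.2 h10)) (mul_pos (sub_pos.2 hπ0.2) (sub_pos.2 h01)) hΓ1) _

theorem stmt_18_general {σ P0 P1 π0t π0r C00t C01t C10t C11t C00r C01r C10r C11r S0s S1s ηs : ℝ}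
    (hσ : 0 < σ) (hP0 : 0 < P0) (hP1 : 0 < P1) (hπt : π0t ∈ Icc 0 1) (hπr : π0r ∈ Ioo 0 1)
    (h10t : C00t ≤ C10t) (h01t : C11t ≤ C01t) (h10r : C00r < C10r) (h01r : C11r < C01r)
    (hS0s : S0s = -√P0) (hS1s : S1s = √P1)
    (hηs : ηs = likelihoodRatioThreshold σ S0s S1s
      (π0r * (C10r - C00r) / ((1 - π0r) * (C01r - C11r)))) :
    (∀ S0 S1 : ℝ, S0 ^ 2 ≤ P0 → S1 ^ 2 ≤ P1 →
        bayesRisk σ S0s S1s π0t C00t C01t C10t C11t (Ici ηs) ≤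
          bayesRisk σ S0 S1 π0t C00t C01t C10t C11t (Ici ηs)) ∧
      (∀ Γ1 : Set ℝ, MeasurableSet Γ1 →
        bayesRisk σ S0s S1s π0r C00r C01r C10r C11r (Ici ηs) ≤
          bayesRisk σ S0s S1s π0r C00r C01r C10r C11r Γ1) ∧
      S0s ≠ S1s := by
  have hS : S0s < S1s := by
    linarith [Real.sqrt_pos.2 hP0, Real.sqrt_pos.2 hP1]
  refine ⟨fun S0 S1 hS0 hS1 ↦ ?_, fun Γ1 hΓ1 ↦ ?_, hS.ne⟩
  · have hS0' : S0s ≤ S0 := hS0s ▸ Real.neg_sqrt_le_of_sq_le hS0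
    have hS1' : S1 ≤ S1s := hS1s ▸ Real.le_sqrt_of_sq_le hS1
    exact bayesRisk_Ici_le_of_le_of_le hσ hπt h10t h01t hS0' hS1' ηs
  · rw [hηs]
    exact bayesRisk_Ici_likelihoodRatioThreshold_le hσ hS hπr h10r h01r hΓ1

/-- Subjective-priors case: transmitter and receiver share the costs
`C₁₀ > C₀₀`, `C₀₁ > C₁₁` but may have different priors `π₀ᵗ, π₀ʳ ∈ (0,1)`. Then
`((-√P₀, √P₁), [η*, ∞))` with `η* = (S₀*+S₁*)/2 + σ² ln τ/(S₁*-S₀*)`,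
`τ = π₀ʳ(C₁₀-C₀₀)/(π₁ʳ(C₀₁-C₁₁))`, is an informative Nash equilibrium: subjectivity
in the priors does not destroy the informative Nash equilibrium. -/
theorem stmt_18 (σ P0 P1 π0t π0r C00 C01 C10 C11 : ℝ)
    (hσ : 0 < σ) (hP0 : 0 < P0) (hP1 : 0 < P1)
    (hπt : π0t ∈ Set.Ioo (0 : ℝ) 1) (hπr : π0r ∈ Set.Ioo (0 : ℝ) 1)
    (h10 : C10 > C00) (h01 : C01 > C11)
    (S0s S1s τ ηs : ℝ)
    (hS0s : S0s = -Real.sqrt P0) (hS1s : S1s = Real.sqrt P1)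
    (hτ : τ = π0r * (C10 - C00) / ((1 - π0r) * (C01 - C11)))
    (hηs : ηs = (S0s + S1s) / 2 + σ ^ 2 * Real.log τ / (S1s - S0s)) :
    (∀ S0 S1 : ℝ, S0 ^ 2 ≤ P0 → S1 ^ 2 ≤ P1 →
        bayesRisk σ S0s S1s π0t C00 C01 C10 C11 (Set.Ici ηs)
          ≤ bayesRisk σ S0 S1 π0t C00 C01 C10 C11 (Set.Ici ηs))
      ∧ (∀ Γ1 : Set ℝ, MeasurableSet Γ1 →
          bayesRisk σ S0s S1s π0r C00 C01 C10 C11 (Set.Ici ηs)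
            ≤ bayesRisk σ S0s S1s π0r C00 C01 C10 C11 Γ1)
      ∧ S0s ≠ S1s := by
  exact stmt_18_general hσ hP0 hP1 (Set.Ioo_subset_Icc_self hπt) hπr h10.le h01.le h10 h01
    hS0s hS1s (by rw [hηs, hτ, likelihoodRatioThreshold])
end
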